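/- Let μ be a compactly supported Borel measure on ℝ^d, d ≥ 2. Then there is a constant c_d > 0, depending only on d, such that ∫_{ℝ^d} |μ̂(ξ)|² ( ∫_{O(d)} |μ̂(gξ)|² dg ) dξ = c_d ∫_0^∞ ( ∫_{S^{d−1}} |μ̂(tω)|² dω )² t^{d−1} dt; that is, the group-theoretic quantity on the left equals a constant multiple of the Mattila integral of μ. -/

import Mathlib

open MeasureTheory Metric Set Topology
open scoped ENNReal

noncomputable section

/-- `ℝ^d` as Euclidean space. -/
abbrev Pt (d : ℕ) := EuclideanSpace ℝ (Fin d)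

/-- The Fourier transform `μ̂(ξ) = ∫ e^{-2πi x·ξ} dμ(x)` of a measure `μ` on `ℝ^d`. -/
def ftM (d : ℕ) (μ : Measure (Pt d)) (ξ : Pt d) : ℂ :=
  ∫ x, Complex.exp ((-(2 * Real.pi * (inner ℝ x ξ : ℝ)) : ℝ) * Complex.I) ∂μ

/-- The `s`-energy `I_s(μ) = ∬ |x-y|^{-s} dμ(x) dμ(y)` of a measure `μ`. -/
def energy (d : ℕ) (s : ℝ) (μ : Measure (Pt d)) : ℝ≥0∞ :=
  ∫⁻ x, ∫⁻ y, edist x y ^ (-s) ∂μ ∂μ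

/-- The surface measure `dω` on the unit sphere `S^{d-1} ⊆ ℝ^d`. -/
def sphM (d : ℕ) : Measure (sphere (0 : Pt d) 1) :=
  (volume : Measure (Pt d)).toSphere

/-- The spherical `L²` average `∫_{S^{d-1}} |μ̂(tω)|² dω` (as a lower integral). -/
def sphAvg (d : ℕ) (μ : Measure (Pt d)) (t : ℝ) : ℝ≥0∞ :=
  ∫⁻ ω, (‖ftM d μ (t • (ω : Pt d))‖₊ : ℝ≥0∞) ^ 2 ∂(sphM d)

/-- The orthogonal group `O(d)` of `ℝ^d`, as a group of matrices. -/
abbrev OG (d : ℕ) : Type := Matrix.orthogonalGroup (Fin d) ℝ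

/-- `O(d)` carries the Borel σ-algebra of its (matrix) topology. -/
instance (d : ℕ) : MeasurableSpace (OG d) := borel _

instance (d : ℕ) : BorelSpace (OG d) := ⟨rfl⟩

/-- The action of a `d × d` matrix on `ℝ^d`. -/
def act (d : ℕ) (g : Matrix (Fin d) (Fin d) ℝ) (v : Pt d) : Pt d :=
  (EuclideanSpace.equiv (Fin d) ℝ).symm (g.mulVec (EuclideanSpace.equiv (Fin d) ℝ v))

/-- The Mattila integral `∫_0^∞ (∫_{S^{d-1}} |μ̂(tω)|² dω)² t^{d-1} dt`. -/
def mattila (d : ℕ) (μ : Measure (Pt d)) : ℝ≥0∞ :=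
  ∫⁻ t in Ioi (0 : ℝ), (sphAvg d μ t) ^ 2 * ENNReal.ofReal (t ^ ((d : ℝ) - 1))

instance OG_secondCountable (d : ℕ) : SecondCountableTopology (OG d) := by
  haveI : SecondCountableTopology (Matrix (Fin d) (Fin d) ℝ) :=
    inferInstanceAs (SecondCountableTopology (Fin d → Fin d → ℝ))
  exact TopologicalSpace.Subtype.secondCountableTopology _

/-- A left invariant probability measure on `O(d)` is right invariant. -/
lemma right_inv (d : ℕ) (dg : Measure (OG d)) [IsProbabilityMeasure dg]
    [dg.IsMulLeftInvariant] : dg.IsMulRightInvariant := by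
  have hinv : IsProbabilityMeasure dg.inv :=
    Measure.isProbabilityMeasure_map measurable_inv.aemeasurable
  have key : dg = dg.inv := by
    ext s hs
    have hm : Measurable (s.indicator (fun _ : OG d => (1 : ℝ≥0∞))) :=
      measurable_const.indicator hs
    have h1 : ∫⁻ g, ∫⁻ h, s.indicator (fun _ : OG d => (1 : ℝ≥0∞)) (g * h) ∂dg ∂dg.inv = dg s := by
      simp_rw [lintegral_mul_left_eq_self (μ := dg)]
      simp [lintegral_indicator hs]
    have h2 : ∫⁻ h, ∫⁻ g, s.indicator (fun _ : OG d => (1 : ℝ≥0∞)) (g * h) ∂dg.inv ∂dg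
        = dg.inv s := by
      have (h : OG d) := lintegral_mul_right_eq_self (μ := dg.inv)
        (s.indicator (fun _ : OG d => (1 : ℝ≥0∞))) h
      simp_rw [this]
      simp [lintegral_indicator hs]
    rw [← h1, ← h2]
    refine lintegral_lintegral_swap ?_
    exact (hm.comp measurable_mul).aemeasurable
  rw [key]
  infer_instance

lemma act_eq (d : ℕ) (g : Matrix (Fin d) (Fin d) ℝ) (v : Pt d) :
    act d g v = Matrix.toEuclideanLin g v := rfl

lemma act_mul (d : ℕ) (g h : Matrix (Fin d) (Fin d) ℝ) (v : Pt d) :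
    act d (g * h) v = act d g (act d h v) := by
  change WithLp.toLp 2 ((g * h).mulVec (WithLp.ofLp v))
    = WithLp.toLp 2 (g.mulVec (h.mulVec (WithLp.ofLp v)))
  rw [Matrix.mulVec_mulVec]

lemma norm_act (d : ℕ) (g : OG d) (v : Pt d) : ‖act d (g : Matrix (Fin d) (Fin d) ℝ) v‖ = ‖v‖ := by
  have h1 : ∀ w : Pt d, ‖w‖ ^ 2 = (WithLp.ofLp w) ⬝ᵥ (WithLp.ofLp w) := by
    intro w
    rw [EuclideanSpace.norm_sq_eq]
    simp [dotProduct, sq]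
  have h2 : ‖act d (g : Matrix (Fin d) (Fin d) ℝ) v‖ ^ 2 = ‖v‖ ^ 2 := by
    rw [h1, h1]
    change (g.1.mulVec (WithLp.ofLp v)) ⬝ᵥ (g.1.mulVec (WithLp.ofLp v)) = _
    have := (Matrix.mem_orthogonalGroup_iff' _ _).1 g.2
    rw [Matrix.dotProduct_mulVec, Matrix.vecMul_mulVec, this, Matrix.vecMul_one]
  exact (sq_eq_sq₀ (norm_nonneg _) (norm_nonneg _)).1 h2

def rotM (d : ℕ) (g : OG d) : Pt d ≃ₗᵢ[ℝ] Pt d :=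
  LinearIsometry.toLinearIsometryEquiv
    (⟨Matrix.toEuclideanLin (g : Matrix (Fin d) (Fin d) ℝ), fun v => by rw [← act_eq]; exact norm_act d g v⟩ : Pt d →ₗᵢ[ℝ] Pt d) rfl

lemma rotM_apply (d : ℕ) (g : OG d) (v : Pt d) : rotM d g v = act d (g : Matrix (Fin d) (Fin d) ℝ) v := rfl

lemma trans_act (d : ℕ) (u v : Pt d) (h : ‖u‖ = ‖v‖) :
    ∃ g : OG d, act d (g : Matrix (Fin d) (Fin d) ℝ) u = v := by
  let φ : Pt d ≃ₗᵢ[ℝ] Pt d := (ℝ ∙ (u - v))ᗮ.reflection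
  have hφ : φ u = v := Submodule.reflection_sub h
  have hm := LinearIsometryEquiv.toMatrix_mem_unitaryGroup φ
    (EuclideanSpace.basisFun (Fin d) ℝ) (EuclideanSpace.basisFun (Fin d) ℝ)
  refine ⟨⟨_, hm⟩, ?_⟩
  rw [← hφ, act_eq, Matrix.toEuclideanLin_eq_toLin_orthonormal, Matrix.toLin_toMatrix]
  rfl

lemma act_smul (d : ℕ) (g : Matrix (Fin d) (Fin d) ℝ) (t : ℝ) (v : Pt d) :
    act d g (t • v) = t • act d g v := by
  rw [act_eq, act_eq, map_smul]

def rotS (d : ℕ) (g : OG d) (w : sphere (0 : Pt d) 1) : sphere (0 : Pt d) 1 :=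
  ⟨act d (g : Matrix (Fin d) (Fin d) ℝ) w, by
    have := w.2
    rw [mem_sphere_zero_iff_norm] at this ⊢
    rw [norm_act, this]⟩

lemma continuous_act (d : ℕ) :
    Continuous fun p : OG d × Pt d => act d (p.1 : Matrix (Fin d) (Fin d) ℝ) p.2 := by
  unfold act
  fun_prop

open scoped Pointwise in
lemma rotS_mp (d : ℕ) (g : OG d) : MeasurePreserving (rotS d g) (sphM d) (sphM d) := by
  have hc : Continuous (rotS d g) :=
    Continuous.subtype_mk ((continuous_act d).comp (by fun_prop : Continuous fun w : sphere (0 : Pt d) 1 => (g, (w : Pt d)))) _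
  refine ⟨hc.measurable, ?_⟩
  ext s hs
  rw [Measure.map_apply hc.measurable hs, sphM, Measure.toSphere_apply' _ (hc.measurable hs),
    Measure.toSphere_apply' _ hs]
  congr 1
  rw [← MeasurePreserving.measure_preimage_equiv (f := (rotM d g).toMeasurableEquiv)
    (rotM d g).measurePreserving (Ioo (0 : ℝ) 1 • (Subtype.val '' s))]
  congr 1
  ext x
  simp only [Set.mem_smul, mem_preimage]
  constructor
  · rintro ⟨r, hr, _, ⟨w, hw, rfl⟩, rfl⟩
    exact ⟨r, hr, _, ⟨_, hw, rfl⟩, (act_smul d _ _ _).symm⟩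
  · rintro ⟨r, hr, _, ⟨w, hw, rfl⟩, hx⟩
    refine ⟨r, hr, r⁻¹ • x, ⟨⟨r⁻¹ • x, ?_⟩, ?_, rfl⟩, smul_inv_smul₀ hr.1.ne' x⟩
    · have h3 : ‖act d (g : Matrix (Fin d) (Fin d) ℝ) x‖ = r := by
        change r • (w : Pt d) = act d (g : Matrix (Fin d) (Fin d) ℝ) x at hx
        rw [← hx, norm_smul, norm_eq_of_mem_sphere, Real.norm_of_nonneg hr.1.le, mul_one]
      rw [norm_act] at h3
      rw [mem_sphere_zero_iff_norm, norm_smul, h3, norm_inv, Real.norm_of_nonneg hr.1.le,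
        inv_mul_cancel₀ hr.1.ne']
    · rw [mem_preimage]
      convert hw
      apply Subtype.ext
      change r • (w : Pt d) = act d (g : Matrix (Fin d) (Fin d) ℝ) x at hx
      change act d (g : Matrix (Fin d) (Fin d) ℝ) (r⁻¹ • x) = w
      rw [act_smul, ← hx, inv_smul_smul₀ hr.1.ne']

lemma ftM_cont (d : ℕ) (μ : Measure (Pt d)) [IsFiniteMeasure μ] : Continuous (ftM d μ) := by
  unfold ftM
  refine continuous_of_dominated (bound := fun _ => 1) ?_ ?_ (integrable_const _) ?_
  · intro ξ
    exact Continuous.aestronglyMeasurable (by fun_prop)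
  · intro ξ
    refine Filter.Eventually.of_forall fun x => ?_
    rw [Complex.norm_exp_ofReal_mul_I]
  · refine Filter.Eventually.of_forall fun x => ?_
    fun_prop

lemma polar (d : ℕ) (hd : 2 ≤ d) (f : Pt d → ℝ≥0∞) (hf : Measurable f) :
    ∫⁻ ξ, f ξ = ∫⁻ t in Ioi (0 : ℝ),
      (∫⁻ ω, f (t • (ω : Pt d)) ∂(sphM d)) * ENNReal.ofReal (t ^ ((d : ℝ) - 1)) := by
  haveI : Nonempty (Fin d) := ⟨⟨0, by omega⟩⟩
  haveI : IsFiniteMeasure (sphM d) := by unfold sphM; infer_instance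
  have hmp := (volume : Measure (Pt d)).measurePreserving_homeomorphUnitSphereProd
  have hS : Measurable fun t : ℝ => ∫⁻ ω, f (t • (ω : Pt d)) ∂(sphM d) := by
    refine Measurable.lintegral_prod_right' (f := fun p : ℝ × sphere (0 : Pt d) 1 => f (p.1 • (p.2 : Pt d))) ?_
    exact hf.comp (by fun_prop)
  have h1 : ∫⁻ ξ, f ξ = ∫⁻ x : ({(0)}ᶜ : Set (Pt d)), f (x : Pt d) ∂(volume.comap Subtype.val) := by
    rw [lintegral_subtype_comap (measurableSet_singleton _).compl f, restrict_compl_singleton]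
  have h2 : ∫⁻ x : ({(0)}ᶜ : Set (Pt d)), f (x : Pt d) ∂(volume.comap Subtype.val)
      = ∫⁻ p, f ((p.2 : ℝ) • (p.1 : Pt d)) ∂((sphM d).prod (Measure.volumeIoiPow (d - 1))) := by
    rw [finrank_euclideanSpace_fin] at hmp
    rw [sphM, ← hmp.lintegral_comp_emb (Homeomorph.measurableEmbedding _)]
    refine lintegral_congr fun x => ?_
    have := (homeomorphUnitSphereProd (Pt d)).symm_apply_apply x
    conv_lhs => rw [← this]
    rfl
  rw [h1, h2, lintegral_prod_symm', Measure.volumeIoiPow, lintegral_withDensity_eq_lintegral_mul]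
  · rw [← lintegral_subtype_comap measurableSet_Ioi]
    refine lintegral_congr fun t => ?_
    rw [Pi.mul_apply, mul_comm]
    congr 2
    rw [← Real.rpow_natCast]
    congr 1
    rw [Nat.cast_sub (by omega)]
    simp
  · fun_prop
  · exact hS.comp measurable_subtype_coe
  · exact hf.comp (by fun_prop)

theorem stmt10 (d : ℕ) (hd : 2 ≤ d) :
    ∃ c : ℝ≥0∞, 0 < c ∧ c ≠ ⊤ ∧
      ∀ (μ : Measure (Pt d)), IsFiniteMeasure μ →
        ∀ (K : Set (Pt d)), IsCompact K → μ Kᶜ = 0 →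
          ∀ (dg : Measure (OG d)), IsProbabilityMeasure dg → dg.IsMulLeftInvariant →
            ∫⁻ ξ, (‖ftM d μ ξ‖₊ : ℝ≥0∞) ^ 2 *
                (∫⁻ g, (‖ftM d μ (act d (g : Matrix (Fin d) (Fin d) ℝ) ξ)‖₊ : ℝ≥0∞) ^ 2 ∂dg)
                ∂volume
              = c * mattila d μ := by
  haveI : Nonempty (Fin d) := ⟨⟨0, by omega⟩⟩
  haveI hfin : IsFiniteMeasure (sphM d) := by unfold sphM; infer_instance
  have hne : sphM d univ ≠ 0 := by
    rw [Ne, Measure.measure_univ_eq_zero, sphM]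
    exact Measure.toSphere_ne_zero _
  have htop : sphM d univ ≠ ⊤ := measure_ne_top _ _
  refine ⟨(sphM d univ)⁻¹, ENNReal.inv_pos.2 htop, ENNReal.inv_ne_top.2 hne, ?_⟩
  intro μ hμ K _ _ dg hdg hleft
  haveI := right_inv d dg
  set F : Pt d → ℝ≥0∞ := fun ξ => (‖ftM d μ ξ‖₊ : ℝ≥0∞) ^ 2 with hF
  have hFm : Measurable F := by
    have : Continuous fun ξ => (‖ftM d μ ξ‖₊ : ℝ≥0∞) :=
      ENNReal.continuous_coe.comp (ftM_cont d μ).nnnorm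
    exact this.measurable.pow_const 2
  set A : Pt d → ℝ≥0∞ := fun ξ => ∫⁻ g, F (act d (g : Matrix (Fin d) (Fin d) ℝ) ξ) ∂dg with hA
  have hAm : Measurable A := by
    have h : Measurable fun p : OG d × Pt d => F (act d (p.1 : Matrix (Fin d) (Fin d) ℝ) p.2) :=
      hFm.comp (continuous_act d).measurable
    exact h.lintegral_prod_left'
  have hinv : ∀ (h : OG d) ξ, A (act d (h : Matrix (Fin d) (Fin d) ℝ) ξ) = A ξ := by
    intro h ξ
    have := lintegral_mul_right_eq_self (μ := dg) (fun g : OG d => F (act d (g : Matrix (Fin d) (Fin d) ℝ) ξ)) h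
    simp only [hA]
    rw [← this]
    refine lintegral_congr fun g => ?_
    rw [← act_mul]
    rfl
  have hrad : ∀ u v : Pt d, ‖u‖ = ‖v‖ → A u = A v := by
    intro u v huv
    obtain ⟨g, hg⟩ := trans_act d u v huv
    rw [← hg, hinv]
  have hav : ∀ (t : ℝ) (w : sphere (0 : Pt d) 1),
      A (t • (w : Pt d)) = (sphM d univ)⁻¹ * sphAvg d μ t := by
    intro t w
    have e1 : ∫⁻ w' : sphere (0 : Pt d) 1, A (t • (w' : Pt d)) ∂(sphM d)
        = A (t • (w : Pt d)) * sphM d univ := by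
      rw [← lintegral_const]
      refine lintegral_congr fun w' => hrad _ _ ?_
      rw [norm_smul, norm_smul, norm_eq_of_mem_sphere, norm_eq_of_mem_sphere]
    have e2 : ∫⁻ w' : sphere (0 : Pt d) 1, A (t • (w' : Pt d)) ∂(sphM d) = sphAvg d μ t := by
      simp only [hA]
      rw [lintegral_lintegral_swap]
      · have (g : OG d) : ∫⁻ w' : sphere (0 : Pt d) 1, F (act d (g : Matrix (Fin d) (Fin d) ℝ) (t • (w' : Pt d))) ∂(sphM d)
            = sphAvg d μ t := by
          have := (rotS_mp d g).lintegral_comp (f := fun w' => F (t • (w' : Pt d)))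
            (hFm.comp (by fun_prop))
          rw [sphAvg, ← this]
          refine lintegral_congr fun w' => ?_
          rw [act_smul]
          rfl
        simp_rw [this]
        simp
      · refine Measurable.aemeasurable ?_
        refine hFm.comp ((continuous_act d).comp (f := fun p : sphere (0 : Pt d) 1 × OG d => (p.2, t • (p.1 : Pt d))) ?_).measurable
        fun_prop
    rw [← e2, e1, mul_comm, mul_assoc, ENNReal.mul_inv_cancel hne htop, mul_one]
  change ∫⁻ ξ, F ξ * A ξ = _
  rw [polar d hd (fun ξ => F ξ * A ξ) (hFm.mul hAm), mattila, ← lintegral_const_mul' _ _ (ENNReal.inv_ne_top.2 hne)]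
  refine lintegral_congr fun t => ?_
  simp_rw [hav]
  have hFt : Measurable fun ω : sphere (0 : Pt d) 1 => F (t • (ω : Pt d)) :=
    hFm.comp (by fun_prop)
  rw [lintegral_mul_const _ hFt]
  change sphAvg d μ t * _ * _ = _
  ring
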